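/- For every integer d ≥ 2 and every balanced word w ∈ Σ^{2p}, the number of w-paths satisfies M_d(w) = Σ_{π∈ANC₂(w)} ∏_{V∈π} (d − 1_{V∈B(π)}), where 1_{V∈B(π)} is 1 if V is a bad block of π and 0 otherwise. -/

import Mathlib

/- Σ = {1,*} is encoded as `Bool`: `true` is the letter `1`, `false` is the letter `*`. -/

/-- The generator `g_i^{w}` in the free group `F_d`. -/
def gens (d : ℕ) (b : Bool) (i : Fin d) : FreeGroup (Fin d) :=
  if b then FreeGroup.of i else (FreeGroup.of i)⁻¹

/-- The product `g_{i_1}^{w_1} ⋯ g_{i_k}^{w_k}` in the free group `F_d`. -/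
def wprod {d k : ℕ} (w : Fin k → Bool) (i : Fin k → Fin d) : FreeGroup (Fin d) :=
  (List.ofFn fun t => gens d (w t) (i t)).prod

/-- The partial product `v_m := g_{i_1}^{w_1} ⋯ g_{i_m}^{w_m}`. -/
def pProd {d k : ℕ} (w : Fin k → Bool) (i : Fin k → Fin d) (m : ℕ) : FreeGroup (Fin d) :=
  ((List.ofFn fun t => gens d (w t) (i t)).take m).prod

open Classical in
/-- The return set of the (0-based) step `j`: all steps `l ≥ j` with `v_{l+1} = v_j`;
its minimum is the first return time `r(j)`. -/
noncomputable def retSet {d k : ℕ} (w : Fin k → Bool) (i : Fin k → Fin d) (j : Fin k) :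
    Finset (Fin k) :=
  Finset.univ.filter fun l => j ≤ l ∧ pProd w i (l.val + 1) = pProd w i j.val

/-- The skeleton of the path: the collection of blocks `{j, r(j)}` for those `j` whose
first return time `r(j)` is defined. -/
def skel {d k : ℕ} (w : Fin k → Bool) (i : Fin k → Fin d) : Set (Finset (Fin k)) :=
  {S | ∃ j l : Fin k, (retSet w i j).min = (l : WithBot (Fin k)) ∧ S = {j, l}}

/-- `w` is balanced: even length, concatenation of blocks `1*` or `*1`. -/
def IsBalanced {k : ℕ} (w : Fin k → Bool) : Prop :=
  k % 2 = 0 ∧ ∀ i : Fin k, i.val % 2 = 0 → ∀ h : i.val + 1 < k, w i ≠ w ⟨i.val + 1, h⟩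

/-- `π` is a partition of `[k]`: no empty block and every element lies in exactly one
block. -/
def IsPartitionF {k : ℕ} (π : Finset (Finset (Fin k))) : Prop :=
  (∅ ∉ π) ∧ ∀ t : Fin k, ∃! S, S ∈ π ∧ t ∈ S

/-- `a` and `b` lie in a common block of `π`. -/
def SameBlockF {k : ℕ} (π : Finset (Finset (Fin k))) (a b : Fin k) : Prop :=
  ∃ S ∈ π, a ∈ S ∧ b ∈ S

/-- `π` is non-crossing. -/
def NonCrossingF {k : ℕ} (π : Finset (Finset (Fin k))) : Prop :=
  ∀ i₁ i₂ j₁ j₂ : Fin k, i₁ < i₂ → i₂ < j₁ → j₁ < j₂ →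
    SameBlockF π i₁ j₁ → SameBlockF π i₂ j₂ → SameBlockF π i₁ i₂

/-- A list of letters is alternating: even length, equal to `1*1*⋯1*` or `*1*1⋯*1`. -/
def IsAltList (u : List Bool) : Prop :=
  u.length % 2 = 0 ∧
    ((∀ m (h : m < u.length), u.get ⟨m, h⟩ = decide (m % 2 = 0)) ∨
     (∀ m (h : m < u.length), u.get ⟨m, h⟩ = decide (m % 2 = 1)))

/-- Every block of `π`, read in increasing order, induces an alternating subword of `w`. -/
def AltBlocks {k : ℕ} (w : Fin k → Bool) (π : Finset (Finset (Fin k))) : Prop :=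
  ∀ S ∈ π, IsAltList ((S.sort (· ≤ ·)).map w)

/-- `π ∈ ANC₂(w)`: an alternating non-crossing partition of `w` all of whose blocks are
pairs. -/
def MemANC2 {k : ℕ} (w : Fin k → Bool) (π : Finset (Finset (Fin k))) : Prop :=
  IsPartitionF π ∧ NonCrossingF π ∧ AltBlocks w π ∧ ∀ S ∈ π, S.card = 2

/-- `j ⊸_π j'` (a bad pair): there are blocks `{j < k₀} ∈ π` and `{j' < k'} ∈ π` with
`j < j' < k' < k₀`, no block `{j'' < k''} ∈ π` with `j < j'' < j' < k' < k'' < k₀`, and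
`w_{j'} ≠ w_j`. -/
def BadPair {k : ℕ} (w : Fin k → Bool) (π : Finset (Finset (Fin k))) (j j' : Fin k) :
    Prop :=
  ∃ k₀ k' : Fin k,
    ({j, k₀} : Finset (Fin k)) ∈ π ∧ ({j', k'} : Finset (Fin k)) ∈ π ∧
    j < j' ∧ j' < k' ∧ k' < k₀ ∧
    (¬ ∃ j'' k'' : Fin k, ({j'', k''} : Finset (Fin k)) ∈ π ∧
      j < j'' ∧ j'' < j' ∧ k' < k'' ∧ k'' < k₀) ∧
    w j' ≠ w j

/-- A bad block `U = {j' < k'} ∈ π`: `j ⊸_π j'` for some `j`, where `j'` is the smaller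
element of `U`. -/
def BadBlock {k : ℕ} (w : Fin k → Bool) (π : Finset (Finset (Fin k)))
    (U : Finset (Fin k)) : Prop :=
  U ∈ π ∧ ∃ j j' : Fin k, BadPair w π j j' ∧ j' ∈ U ∧ ∀ x ∈ U, j' ≤ x

/-- `Mword d w` is the number of `w`-paths. -/
noncomputable def Mword (d : ℕ) {k : ℕ} (w : Fin k → Bool) : ℕ :=
  Nat.card {i : Fin k → Fin d // wprod w i = 1}

open Classical in
/-- The set `ANC₂(w)` of alternating non-crossing pair partitions of `w`. -/
noncomputable def ANC2 {k : ℕ} (w : Fin k → Bool) : Finset (Finset (Finset (Fin k))) :=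
  Finset.univ.filter (MemANC2 w)


/-- Letters at positions `a` and `b` cancel. -/
def Canc {d k : ℕ} (w : Fin k → Bool) (i : Fin k → Fin d) (a b : Fin k) : Prop :=
  i a = i b ∧ w a ≠ w b

open Classical in
/-- One step of the reduction: pop if the letter cancels with the top, push otherwise. -/
noncomputable def stkStep {d k : ℕ} (w : Fin k → Bool) (i : Fin k → Fin d) (t : Fin k) :
    List (Fin k) → List (Fin k)
  | [] => [t]
  | a :: s => if Canc w i a t then s else t :: a :: s

/-- The stack of open positions after `t` steps of the reduction. -/
noncomputable def stk {d k : ℕ} (w : Fin k → Bool) (i : Fin k → Fin d) : ℕ → List (Fin k)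
  | 0 => []
  | t + 1 => if h : t < k then stkStep w i ⟨t, h⟩ (stk w i t) else stk w i t

/-- Position `t` closes position `a` in the reduction. -/
def Cl {d k : ℕ} (w : Fin k → Bool) (i : Fin k → Fin d) (a t : Fin k) : Prop :=
  ∃ s, stk w i t.val = a :: s ∧ Canc w i a t

section
variable {d k : ℕ} {w : Fin k → Bool} {i : Fin k → Fin d}

lemma stk_pop {a t : Fin k} {s : List (Fin k)} (h : stk w i t.val = a :: s)
    (hc : Canc w i a t) : stk w i (t.val + 1) = s := by
  simp [stk, h, stkStep, hc]

lemma stk_push {t : Fin k} (h : ∀ a, ¬ Cl w i a t) :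
    stk w i (t.val + 1) = t :: stk w i t.val := by
  rw [stk, dif_pos t.2]
  rcases hs : stk w i t.val with _ | ⟨a, s⟩
  · simp [stkStep]
  · have : ¬ Canc w i a t := fun hc => h a ⟨s, hs, hc⟩
    simp [stkStep, this]

lemma stk_sorted (t : ℕ) (ht : t ≤ k) :
    (stk w i t).Pairwise (· > ·) ∧ ∀ a ∈ stk w i t, a.val < t := by
  induction t with
  | zero => simp [stk]
  | succ t ih =>
    obtain ⟨h1, h2⟩ := ih (by omega)
    by_cases hcl : ∃ a, Cl w i a ⟨t, ht⟩
    · obtain ⟨a, s, hs, hc⟩ := hcl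
      have := stk_pop hs hc
      simp only at this hs
      rw [this]
      rw [hs] at h1 h2
      refine ⟨(List.pairwise_cons.1 h1).2, fun b hb => ?_⟩
      have := h2 b (List.mem_cons_of_mem _ hb)
      omega
    · push Not at hcl
      have := stk_push hcl
      simp only at this
      rw [this]
      refine ⟨List.pairwise_cons.2 ⟨fun b hb => ?_, h1⟩, fun b hb => ?_⟩
      · exact h2 b hb
      · rcases List.mem_cons.1 hb with rfl | hb
        · simp
        · have := h2 b hb
          omega

lemma stk_chain (t : ℕ) (ht : t ≤ k) :
    (stk w i t).IsChain (fun a b => i a = i b → w a = w b) := by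
  induction t with
  | zero => simp [stk]
  | succ t ih =>
    have h1 := ih (by omega)
    by_cases hcl : ∃ a, Cl w i a ⟨t, ht⟩
    · obtain ⟨a, s, hs, hc⟩ := hcl
      have := stk_pop hs hc
      simp only at this hs
      rw [this]
      rw [hs] at h1
      exact h1.tail
    · push Not at hcl
      have := stk_push hcl
      simp only at this
      rw [this]
      rcases hs : stk w i t with _ | ⟨a, s⟩
      · simp
      · rw [hs] at h1
        refine List.isChain_cons_cons.2 ⟨fun he => ?_, h1⟩
        by_contra hne
        exact hcl a ⟨s, hs, he.symm, fun h => hne h.symm⟩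

lemma gens_mk (b : Bool) (x : Fin d) : gens d b x = FreeGroup.mk [(x, b)] := by
  cases b <;> simp [gens, FreeGroup.of, FreeGroup.inv_mk, FreeGroup.invRev]

lemma gens_canc {b b' : Bool} (x : Fin d) (h : b ≠ b') : gens d b x * gens d b' x = 1 := by
  cases b <;> cases b' <;> simp_all [gens]

lemma pProd_succ (t : Fin k) :
    pProd w i (t.val + 1) = pProd w i t.val * gens d (w t) (i t) := by
  unfold pProd
  rw [List.take_add_one, List.prod_append]
  simp

lemma stk_prod (t : ℕ) (ht : t ≤ k) :
    pProd w i t = FreeGroup.mk ((stk w i t).reverse.map fun a => (i a, w a)) := by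
  induction t with
  | zero => simp [stk, pProd, FreeGroup.one_eq_mk]
  | succ t ih =>
    have h1 := ih (by omega)
    have hp := pProd_succ (w := w) (i := i) ⟨t, ht⟩
    simp only at hp
    rw [hp, h1]
    by_cases hcl : ∃ a, Cl w i a ⟨t, ht⟩
    · obtain ⟨a, s, hs, hc⟩ := hcl
      have := stk_pop hs hc
      simp only at this hs
      rw [this, hs, List.reverse_cons, List.map_append, ← FreeGroup.mul_mk, mul_assoc,
        List.map_singleton, ← gens_mk, hc.1, gens_canc _ hc.2, mul_one]
    · push Not at hcl
      have := stk_push hcl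
      simp only at this
      rw [this, List.reverse_cons, List.map_append, ← FreeGroup.mul_mk, List.map_singleton,
        ← gens_mk]

lemma wprod_eq_one_iff : wprod w i = 1 ↔ stk w i k = [] := by
  have h : wprod w i = pProd w i k := by
    unfold wprod pProd
    rw [List.take_of_length_le (by simp)]
  rw [h, stk_prod k le_rfl]
  constructor
  · intro h
    have hr : FreeGroup.IsReduced ((stk w i k).reverse.map fun a => (i a, w a)) := by
      unfold FreeGroup.IsReduced
      rw [List.isChain_map, List.isChain_reverse]
      refine (stk_chain k le_rfl).imp ?_
      intro a b hab h
      exact (hab h.symm).symm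
    have h2 := hr.reduce_eq
    rw [FreeGroup.one_eq_mk] at h
    have h3 := congrArg FreeGroup.toWord h
    simp only [FreeGroup.toWord_mk, h2] at h3
    simpa using h3
  · intro h
    simp [h, FreeGroup.one_eq_mk]

lemma cl_lt {a t : Fin k} (h : Cl w i a t) : a < t := by
  obtain ⟨s, hs, -⟩ := h
  exact (stk_sorted (w := w) (i := i) t.val t.2.le).2 a (by simp [hs])

lemma cl_mem {a t : Fin k} (h : Cl w i a t) : a ∈ stk w i t.val := by
  obtain ⟨s, hs, -⟩ := h
  simp [hs]

lemma cl_top {a t c : Fin k} (h : Cl w i a t) (hc : c ∈ stk w i t.val) : c ≤ a := by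
  obtain ⟨s, hs, -⟩ := h
  have := (stk_sorted (w := w) (i := i) t.val t.2.le).1
  rw [hs] at this hc
  rcases List.mem_cons.1 hc with rfl | hc
  · exact le_rfl
  · exact ((List.pairwise_cons.1 this).1 c hc).le

lemma cl_inj {a a' t : Fin k} (h : Cl w i a t) (h' : Cl w i a' t) : a = a' :=
  le_antisymm (cl_top h' (cl_mem h)) (cl_top h (cl_mem h'))

lemma mem_stk (t : ℕ) (ht : t ≤ k) (a : Fin k) :
    a ∈ stk w i t ↔ a.val < t ∧ (∀ c, ¬ Cl w i c a) ∧ ∀ b, Cl w i a b → t ≤ b.val := by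
  induction t with
  | zero => simp [stk]
  | succ t ih =>
    have h1 := ih (by omega)
    have hsrt := (stk_sorted (w := w) (i := i) t (by omega)).1
    by_cases hcl : ∃ c, Cl w i c ⟨t, ht⟩
    · obtain ⟨c, hc'⟩ := hcl
      obtain ⟨s, hs, hc⟩ := hc'
      have hc' : Cl w i c ⟨t, ht⟩ := ⟨s, hs, hc⟩
      have := stk_pop hs hc
      simp only at this hs
      rw [this]
      rw [hs] at h1 hsrt
      have hns : c ∉ s := fun hm => lt_irrefl _ ((List.pairwise_cons.1 hsrt).1 c hm)
      constructor
      · intro ha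
        have hac : a ≠ c := fun h => hns (h ▸ ha)
        obtain ⟨h3, h4, h5⟩ := h1.1 (List.mem_cons_of_mem _ ha)
        refine ⟨by omega, h4, fun b hb => ?_⟩
        have := h5 b hb
        rcases Nat.lt_or_ge t b.val with h | h
        · omega
        · have hb' : b = ⟨t, ht⟩ := Fin.ext (by simp; omega)
          subst hb'
          exact absurd (cl_inj hb hc') hac
      · rintro ⟨h3, h4, h5⟩
        have hat : a ≠ ⟨t, ht⟩ := fun h => h4 c (h ▸ hc')
        have hat' : a.val ≠ t := fun h => hat (Fin.ext h)
        have hac : a ≠ c := by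
          rintro rfl
          have := h5 _ hc'
          simp at this
        have := h1.2 ⟨by omega, h4, fun b hb => by have := h5 b hb; omega⟩
        exact (List.mem_cons.1 this).resolve_left hac
    · push Not at hcl
      have := stk_push hcl
      simp only at this
      rw [this, List.mem_cons, h1]
      constructor
      · rintro (rfl | ⟨h3, h4, h5⟩)
        · exact ⟨by simp, hcl, fun b hb => cl_lt hb⟩
        · refine ⟨by omega, h4, fun b hb => ?_⟩
          have := h5 b hb
          rcases Nat.lt_or_ge t b.val with h | h
          · omega
          · have hb' : b = ⟨t, ht⟩ := Fin.ext (by simp; omega)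
            subst hb'
            exact absurd hb (hcl a)
      · rintro ⟨h3, h4, h5⟩
        by_cases hat : a.val = t
        · exact Or.inl (Fin.ext hat)
        · exact Or.inr ⟨by omega, h4, fun b hb => by have := h5 b hb; omega⟩

lemma cl_opener {a b c : Fin k} (h : Cl w i a b) : ¬ Cl w i c a :=
  ((mem_stk b.val b.2.le a).1 (cl_mem h)).2.1 c

lemma cl_inj' {a b b' : Fin k} (h : Cl w i a b) (h' : Cl w i a b') : b = b' :=
  le_antisymm (((mem_stk b.val b.2.le a).1 (cl_mem h)).2.2 b' h')
    (((mem_stk b'.val b'.2.le a).1 (cl_mem h')).2.2 b h)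

lemma cl_nc {a b c e : Fin k} (h : Cl w i a b) (h' : Cl w i c e) (h1 : a < c) (h2 : c < b)
    (h3 : b < e) : False := by
  have : c ∈ stk w i b.val := (mem_stk b.val b.2.le c).2
    ⟨h2, fun x => cl_opener h', fun x hx => by rw [cl_inj' hx h']; exact h3.le⟩
  exact absurd (cl_top h this) (not_le.2 h1)

lemma cl_exists (hk : stk w i k = []) (t : Fin k) : (∃ a, Cl w i a t) ∨ ∃ b, Cl w i t b := by
  by_contra hcon
  push Not at hcon
  have : t ∈ stk w i k := (mem_stk k le_rfl t).2 ⟨t.2, hcon.1, fun b hb => absurd hb (hcon.2 b)⟩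
  simp [hk] at this

end

lemma pair_eq_iff' {α : Type*} [DecidableEq α] {x y z u : α} :
    ({x, y} : Finset α) = {z, u} ↔ x = z ∧ y = u ∨ x = u ∧ y = z := by
  rw [← Finset.coe_inj]
  simp only [Finset.coe_insert, Finset.coe_singleton]
  exact Set.pair_eq_pair_iff

lemma isAlt_pair_iff {k : ℕ} (w : Fin k → Bool) {a b : Fin k} (h : a < b) :
    IsAltList ((({a, b} : Finset (Fin k)).sort (· ≤ ·)).map w) ↔ w a ≠ w b := by
  have hs : ({a, b} : Finset (Fin k)).sort (· ≤ ·) = [a, b] := by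
    rw [Finset.sort_insert (· ≤ ·) (by simpa using h.le) (by simpa using h.ne)]
    simp
  rw [hs]
  simp only [IsAltList, List.map_cons, List.map_nil, List.length_cons, List.length_nil]
  constructor
  · rintro ⟨-, h | h⟩
    · have h0 := h 0 (by simp)
      have h1 := h 1 (by simp)
      simp at h0 h1
      simp [h0, h1]
    · have h0 := h 0 (by simp)
      have h1 := h 1 (by simp)
      simp at h0 h1
      simp [h0, h1]
  · intro hne
    refine ⟨by simp, ?_⟩
    rcases (Bool.eq_false_or_eq_true (w a)).symm with ha | ha
    · right
      have hb : w b = true := by cases hb : w b <;> simp_all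
      intro m hm
      have : m = 0 ∨ m = 1 := by omega
      rcases this with rfl | rfl <;> simp [ha, hb]
    · left
      have hb : w b = false := by cases hb : w b <;> simp_all
      intro m hm
      have : m = 0 ∨ m = 1 := by omega
      rcases this with rfl | rfl <;> simp [ha, hb]

section
variable {d k : ℕ} {w : Fin k → Bool} {i : Fin k → Fin d} {π : Finset (Finset (Fin k))}

lemma anc_block (h : MemANC2 w π) {S : Finset (Fin k)} (hS : S ∈ π) :
    ∃ a b, a < b ∧ S = {a, b} := by
  obtain ⟨a, b, hab, rfl⟩ := Finset.card_eq_two.1 (h.2.2.2 S hS)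
  rcases lt_or_gt_of_ne hab with h | h
  · exact ⟨a, b, h, rfl⟩
  · exact ⟨b, a, h, Finset.pair_comm a b⟩

lemma anc_partner (h : MemANC2 w π) (t : Fin k) :
    (∃ a, a < t ∧ {a, t} ∈ π) ∨ ∃ b, t < b ∧ {t, b} ∈ π := by
  obtain ⟨S, ⟨hS, ht⟩, -⟩ := h.1.2 t
  obtain ⟨a, b, hab, rfl⟩ := anc_block h hS
  simp only [Finset.mem_insert, Finset.mem_singleton] at ht
  rcases ht with rfl | rfl
  · exact Or.inr ⟨b, hab, hS⟩
  · exact Or.inl ⟨a, hab, hS⟩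

lemma anc_unique (h : MemANC2 w π) {S S' : Finset (Fin k)} (hS : S ∈ π) (hS' : S' ∈ π)
    {t : Fin k} (ht : t ∈ S) (ht' : t ∈ S') : S = S' :=
  (h.1.2 t).unique ⟨hS, ht⟩ ⟨hS', ht'⟩

/-- the left partner is unique -/
lemma anc_left (h : MemANC2 w π) {a a' t : Fin k} (h1 : {a, t} ∈ π) (h2 : {a', t} ∈ π) :
    a = a' := by
  have := anc_unique h h1 h2 (t := t) (by simp) (by simp)
  rw [pair_eq_iff'] at this
  grind

lemma anc_right (h : MemANC2 w π) {a b b' : Fin k} (h1 : {a, b} ∈ π) (h2 : {a, b'} ∈ π) :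
    b = b' := by
  rw [Finset.pair_comm] at h1 h2
  exact anc_left h h1 h2

lemma anc_mid (h : MemANC2 w π) {a b c : Fin k} (h1 : {a, b} ∈ π) (h2 : {b, c} ∈ π)
    (h3 : a < b) (h4 : b < c) : False := by
  rw [Finset.pair_comm] at h1
  have := anc_right h h1 h2
  subst this
  exact absurd h3 (not_lt.2 h4.le)

lemma anc_nc (h : MemANC2 w π) {a b c e : Fin k} (h1 : {a, b} ∈ π) (h2 : {c, e} ∈ π)
    (hac : a < c) (hcb : c < b) (hbe : b < e) : False := by
  obtain ⟨S, hS, ha, hc⟩ := h.2.1 a c b e hac hcb hbe ⟨_, h1, by simp, by simp⟩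
    ⟨_, h2, by simp, by simp⟩
  have e1 := anc_unique h hS h1 ha (by simp)
  rw [e1] at hc
  simp only [Finset.mem_insert, Finset.mem_singleton] at hc
  rcases hc with rfl | rfl
  · exact lt_irrefl _ hac
  · exact lt_irrefl _ hcb

lemma anc_alt (h : MemANC2 w π) {a b : Fin k} (h1 : {a, b} ∈ π) (hab : a < b) : w a ≠ w b :=
  (isAlt_pair_iff w hab).1 (h.2.2.1 _ h1)

/-- Compatibility of a labelling with a pair partition. -/
def Compat (w : Fin k → Bool) (π : Finset (Finset (Fin k))) (i : Fin k → Fin d) : Prop :=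
  ∀ t, (∀ a, a < t → {a, t} ∈ π → i a = i t) ∧ ∀ j, BadPair w π j t → i j ≠ i t

lemma compat_step (h : MemANC2 w π) (hc : Compat w π i) (t : Fin k)
    (hm : ∀ a, a ∈ stk w i t.val ↔ ∃ b, {a, b} ∈ π ∧ a.val < t.val ∧ t.val ≤ b.val) (a : Fin k) :
    Cl w i a t ↔ a < t ∧ {a, t} ∈ π := by
  have hsrt := (stk_sorted (w := w) (i := i) t.val t.2.le).1
  have key : ∀ a, a < t → {a, t} ∈ π → Cl w i a t := by
    intro a hat hp
    have ha : a ∈ stk w i t.val := (hm a).2 ⟨t, hp, hat, le_rfl⟩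
    rcases hs : stk w i t.val with _ | ⟨j, s⟩
    · simp [hs] at ha
    · by_cases hja : j = a
      · subst hja
        exact ⟨s, hs, (hc t).1 j hat hp, anc_alt h hp hat⟩
      · exfalso
        obtain ⟨b, hjb, hjt, htb⟩ := (hm j).1 (by simp [hs])
        rw [hs] at ha hsrt
        have haj : a < j := (List.pairwise_cons.1 hsrt).1 a
          ((List.mem_cons.1 ha).resolve_left (Ne.symm hja))
        have hbt : b ≠ t := by
          rintro rfl
          exact hja (anc_left h hjb hp)
        exact anc_nc h hp hjb haj hjt (lt_of_le_of_ne htb hbt.symm)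
  constructor
  · intro hcl
    rcases anc_partner h t with ⟨a', ha', hp⟩ | ⟨b, hb, hp⟩
    · have := cl_inj hcl (key a' ha' hp)
      subst this
      exact ⟨ha', hp⟩
    · exfalso
      have hat := cl_lt hcl
      obtain ⟨k₀, hk, -, htk⟩ := (hm a).1 (cl_mem hcl)
      have hkt : t ≠ k₀ := by
        rintro rfl
        exact anc_mid h hk hp hat hb
      have htk : t < k₀ := lt_of_le_of_ne htk hkt
      have hbk : b < k₀ := by
        rcases lt_trichotomy b k₀ with h' | h' | h'
        · exact h'
        · subst h'
          exact absurd (anc_left h hp hk) hat.ne'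
        · exact (anc_nc h hk hp hat htk h').elim
      have hbad : BadPair w π a t := by
        obtain ⟨s, hs, hcc⟩ := hcl
        refine ⟨k₀, b, hk, hp, hat, hb, hbk, ?_, hcc.2.symm⟩
        rintro ⟨j'', k'', hjk, h1, h2, h3, h4⟩
        have hj : j'' ∈ stk w i t.val := (hm j'').2 ⟨k'', hjk, h2, (hb.trans h3).le⟩
        exact absurd (cl_top ⟨s, hs, hcc⟩ hj) (not_le.2 h1)
      exact (hc t).2 a hbad hcl.choose_spec.2.1
  · rintro ⟨h1, h2⟩
    exact key a h1 h2

lemma compat_stk (h : MemANC2 w π) (hc : Compat w π i) (t : ℕ) (ht : t ≤ k) :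
    ∀ a, a ∈ stk w i t ↔ ∃ b, {a, b} ∈ π ∧ a.val < t ∧ t ≤ b.val := by
  induction t with
  | zero => simp [stk]
  | succ t ih =>
    intro a
    have ih := ih (by omega)
    have hcl := compat_step h hc ⟨t, ht⟩ ih
    rw [mem_stk _ ht]
    have ih' := ih a
    rw [mem_stk _ (by omega)] at ih'
    constructor
    · rintro ⟨h1, h2, h3⟩
      by_cases hat : a.val = t
      · have hat' : a = ⟨t, ht⟩ := Fin.ext hat
        rcases anc_partner h a with ⟨c, hc1, hc2⟩ | ⟨b, hb1, hb2⟩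
        · exact absurd ((hcl c).2 (hat' ▸ ⟨hc1, hc2⟩)) (hat' ▸ h2 c)
        · exact ⟨b, hb2, h1, by have : a.val < b.val := hb1
                                omega⟩
      · obtain ⟨b, hb, hb1, hb2⟩ := ih'.1 ⟨by omega, h2, fun b hb => by have := h3 b hb; omega⟩
        refine ⟨b, hb, h1, ?_⟩
        rcases Nat.lt_or_ge t b.val with h' | h'
        · omega
        · have hb' : b = ⟨t, ht⟩ := Fin.ext (by simp; omega)
          subst hb'
          have := h3 _ ((hcl a).2 ⟨hb1, hb⟩)
          omega
    · rintro ⟨b, hb, h1, h2⟩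
      by_cases hat : a.val = t
      · have hat' : a = ⟨t, ht⟩ := Fin.ext hat
        refine ⟨h1, fun c hcc => ?_, fun b hb => ?_⟩
        · rw [hat'] at hcc hb
          obtain ⟨h3, h4⟩ := (hcl c).1 hcc
          exact anc_mid h h4 hb h3 (by rw [Fin.lt_def]; simp; omega)
        · have : a.val < b.val := cl_lt hb
          omega
      · obtain ⟨-, h4, h5⟩ := ih'.2 ⟨b, hb, by omega, by omega⟩
        refine ⟨h1, h4, fun e he => ?_⟩
        have := h5 e he
        rcases Nat.lt_or_ge t e.val with h' | h'
        · omega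
        · have he' : e = ⟨t, ht⟩ := Fin.ext (by simp; omega)
          subst he'
          have := anc_right h ((hcl a).1 he).2 hb
          subst this
          simp at h2

lemma compat_cl (h : MemANC2 w π) (hc : Compat w π i) (a t : Fin k) :
    Cl w i a t ↔ a < t ∧ {a, t} ∈ π :=
  compat_step h hc t (compat_stk h hc t.val t.2.le) a

lemma compat_path (h : MemANC2 w π) (hc : Compat w π i) : wprod w i = 1 := by
  rw [wprod_eq_one_iff, List.eq_nil_iff_forall_not_mem]
  intro a ha
  obtain ⟨b, -, -, hb⟩ := (compat_stk h hc k le_rfl a).1 ha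
  omega

lemma compat_unique {π' : Finset (Finset (Fin k))} (h : MemANC2 w π) (hc : Compat w π i)
    (h' : MemANC2 w π') (hc' : Compat w π' i) : π = π' := by
  ext S
  constructor
  · intro hS
    obtain ⟨a, b, hab, rfl⟩ := anc_block h hS
    exact ((compat_cl h' hc' a b).1 ((compat_cl h hc a b).2 ⟨hab, hS⟩)).2
  · intro hS
    obtain ⟨a, b, hab, rfl⟩ := anc_block h' hS
    exact ((compat_cl h hc a b).1 ((compat_cl h' hc' a b).2 ⟨hab, hS⟩)).2

lemma compat_exists (hp : wprod w i = 1) :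
    ∃ π : Finset (Finset (Fin k)), MemANC2 w π ∧ Compat w π i := by
  classical
  have hk := wprod_eq_one_iff.1 hp
  let π : Finset (Finset (Fin k)) := Finset.univ.filter fun S => ∃ a b, Cl w i a b ∧ S = {a, b}
  have hπ : ∀ S, S ∈ π ↔ ∃ a b, Cl w i a b ∧ S = {a, b} := by simp [π]
  have hpair : ∀ a b, a < b → ({a, b} ∈ π ↔ Cl w i a b) := by
    intro a b hab
    rw [hπ]
    constructor
    · rintro ⟨x, y, hxy, he⟩
      rcases pair_eq_iff'.1 he with ⟨rfl, rfl⟩ | ⟨rfl, rfl⟩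
      · exact hxy
      · exact absurd (cl_lt hxy) (not_lt.2 hab.le)
    · intro h
      exact ⟨a, b, h, rfl⟩
  have huniq : ∀ S ∈ π, ∀ S' ∈ π, ∀ t, t ∈ S → t ∈ S' → S = S' := by
    intro S hS S' hS' t ht ht'
    obtain ⟨a, b, hab, rfl⟩ := (hπ S).1 hS
    obtain ⟨a', b', hab', rfl⟩ := (hπ S').1 hS'
    simp only [Finset.mem_insert, Finset.mem_singleton] at ht ht'
    rcases ht with rfl | rfl <;> rcases ht' with rfl | rfl
    · rw [cl_inj' hab hab']
    · exact absurd hab' (cl_opener hab)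
    · exact absurd hab (cl_opener hab')
    · rw [cl_inj hab hab']
  have hsame : ∀ a b, a < b → SameBlockF π a b → Cl w i a b := by
    rintro a b hab ⟨S, hS, ha, hb⟩
    obtain ⟨x, y, hxy, rfl⟩ := (hπ S).1 hS
    have hlt := cl_lt hxy
    simp only [Finset.mem_insert, Finset.mem_singleton] at ha hb
    rcases ha with rfl | rfl <;> rcases hb with rfl | rfl
    · exact absurd hab (lt_irrefl _)
    · exact hxy
    · exact absurd hab (not_lt.2 hlt.le)
    · exact absurd hab (lt_irrefl _)
  refine ⟨π, ⟨⟨?_, ?_⟩, ?_, ?_, ?_⟩, fun t => ⟨?_, ?_⟩⟩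
  · intro h
    obtain ⟨a, b, -, he⟩ := (hπ _).1 h
    exact absurd he.symm (Finset.insert_ne_empty _ _)
  · intro t
    rcases cl_exists hk t with ⟨a, ha⟩ | ⟨b, hb⟩
    · exact ⟨{a, t}, ⟨(hπ _).2 ⟨a, t, ha, rfl⟩, by simp⟩, fun S hS =>
        huniq _ hS.1 _ ((hπ _).2 ⟨a, t, ha, rfl⟩) t hS.2 (by simp)⟩
    · exact ⟨{t, b}, ⟨(hπ _).2 ⟨t, b, hb, rfl⟩, by simp⟩, fun S hS =>
        huniq _ hS.1 _ ((hπ _).2 ⟨t, b, hb, rfl⟩) t hS.2 (by simp)⟩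
  · intro a c b e h1 h2 h3 hab hce
    exact (cl_nc (hsame a b (h1.trans h2) hab) (hsame c e (h2.trans h3) hce) h1 h2 h3).elim
  · intro S hS
    obtain ⟨a, b, hab, rfl⟩ := (hπ S).1 hS
    exact (isAlt_pair_iff w (cl_lt hab)).2 hab.choose_spec.2.2
  · intro S hS
    obtain ⟨a, b, hab, rfl⟩ := (hπ S).1 hS
    exact Finset.card_pair (cl_lt hab).ne
  · intro a hat h
    exact ((hpair a t hat).1 h).choose_spec.2.1
  · rintro j ⟨k₀, k', hjk, htk, hjt, htk', hkk, hno, hw⟩ heq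
    have c1 := (hpair _ _ (hjt.trans (htk'.trans hkk))).1 hjk
    have c2 := (hpair _ _ htk').1 htk
    have hj : j ∈ stk w i t.val := (mem_stk t.val t.2.le j).2
      ⟨hjt, fun c => cl_opener c1, fun b hb => by
        rw [cl_inj' hb c1]; exact (htk'.trans hkk).le⟩
    rcases hs : stk w i t.val with _ | ⟨x, s⟩
    · simp [hs] at hj
    · by_cases hxj : x = j
      · subst hxj
        exact cl_opener c2 ⟨s, hs, heq, hw.symm⟩
      · have hx : x ∈ stk w i t.val := by simp [hs]
        have hsrt := (stk_sorted (w := w) (i := i) t.val t.2.le).1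
        rw [hs] at hj hsrt
        have hjx : j < x := (List.pairwise_cons.1 hsrt).1 j
          ((List.mem_cons.1 hj).resolve_left (Ne.symm hxj))
        obtain ⟨hxt, hx1, hx2⟩ := (mem_stk t.val t.2.le x).1 hx
        rcases cl_exists hk x with ⟨c, hc⟩ | ⟨y, hy⟩
        · exact hx1 c hc
        · have hty : t < y := lt_of_le_of_ne (hx2 y hy) (by
            rintro rfl
            exact cl_opener c2 hy)
          refine hno ⟨x, y, (hπ _).2 ⟨x, y, hy, rfl⟩, hjx, hxt, ?_, ?_⟩
          · rcases lt_trichotomy k' y with h | h | h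
            · exact h
            · subst h
              exact absurd (cl_inj hy c2) (ne_of_lt hxt)
            · exact (cl_nc hy c2 hxt hty h).elim
          · rcases lt_trichotomy y k₀ with h | h | h
            · exact h
            · subst h
              exact absurd (cl_inj hy c1) hxj
            · exact (cl_nc c1 hy hjx (lt_trans hxt (htk'.trans hkk)) h).elim

end

lemma count_gen {d : ℕ} (x0 : Fin d) : ∀ {k : ℕ} (C : Fin k → (Fin k → Fin d) → Prop)
    (c : Fin k → ℕ)
    (_ : ∀ t f g, (∀ s, s ≤ t → f s = g s) → (C t f ↔ C t g))
    (_ : ∀ t f, Nat.card {x // C t (Function.update f t x)} = c t),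
    Nat.card {f : Fin k → Fin d // ∀ t, C t f} = ∏ t, c t
  | 0, C, c, _, _ => by
    have : Unique {f : Fin 0 → Fin d // ∀ t, C t f} :=
      { default := ⟨fun t => t.elim0, fun t => t.elim0⟩
        uniq := fun f => Subtype.ext (funext fun t => t.elim0) }
    simp
  | k + 1, C, c, hloc, hc => by
    have ih := count_gen x0 (k := k)
      (fun t g => C t.castSucc (Fin.snoc (α := fun _ => Fin d) g x0)) (fun t => c t.castSucc)
      (by
        intro t f g hfg
        refine hloc _ _ _ fun s hs => ?_
        have hlt : s.val < k := lt_of_le_of_lt (Fin.le_def.1 hs) t.2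
        have hs' : s = Fin.castSucc ⟨s.val, hlt⟩ := rfl
        rw [hs', Fin.snoc_castSucc, Fin.snoc_castSucc]
        exact hfg _ hs)
      (by
        intro t f
        rw [← hc t.castSucc (Fin.snoc (α := fun _ => Fin d) f x0)]
        simp only [Fin.snoc_update])
    have hC : ∀ (t : Fin k) (g : Fin k → Fin d) (x y : Fin d),
        C t.castSucc (Fin.snoc (α := fun _ => Fin d) g x) ↔
          C t.castSucc (Fin.snoc (α := fun _ => Fin d) g y) := by
      intro t g x y
      refine hloc _ _ _ fun s hs => ?_
      have hlt : s.val < k := lt_of_le_of_lt (Fin.le_def.1 hs) t.2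
      have hs' : s = Fin.castSucc ⟨s.val, hlt⟩ := rfl
      rw [hs', Fin.snoc_castSucc, Fin.snoc_castSucc]
    let e : {f : Fin (k + 1) → Fin d // ∀ t, C t f} ≃
        Σ g : {g : Fin k → Fin d //
          ∀ t : Fin k, C t.castSucc (Fin.snoc (α := fun _ => Fin d) g x0)},
          {x : Fin d // C (Fin.last k) (Fin.snoc (α := fun _ => Fin d) g.1 x)} :=
      { toFun := fun f => ⟨⟨Fin.init (α := fun _ => Fin d) f.1, fun t => by
            rw [hC t _ x0 (f.1 (Fin.last k)), Fin.snoc_init_self]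
            exact f.2 _⟩, ⟨f.1 (Fin.last k), by
            rw [Fin.snoc_init_self]
            exact f.2 _⟩⟩
        invFun := fun p => ⟨Fin.snoc (α := fun _ => Fin d) p.1.1 p.2.1, fun t => by
            induction t using Fin.lastCases with
            | last => exact p.2.2
            | cast t => rw [hC t _ _ x0]; exact p.1.2 t⟩
        left_inv := fun f => by
          apply Subtype.ext
          simp
        right_inv := fun p => by
          obtain ⟨⟨g, hg⟩, ⟨x, hx⟩⟩ := p
          simp only [Sigma.mk.injEq, Fin.init_snoc, true_and]
          congr 1 <;> simp }
    classical
    rw [Nat.card_congr e, Nat.card_sigma, Fin.prod_univ_castSucc, ← ih]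
    have hx : ∀ g : {g : Fin k → Fin d //
          ∀ t : Fin k, C t.castSucc (Fin.snoc (α := fun _ => Fin d) g x0)},
        Nat.card {x : Fin d // C (Fin.last k) (Fin.snoc (α := fun _ => Fin d) g.1 x)} =
          c (Fin.last k) := by
      intro g
      rw [← hc (Fin.last k) (Fin.snoc (α := fun _ => Fin d) g.1 x0)]
      simp only [Fin.update_snoc_last]
    simp only [hx]
    simp [Nat.card_eq_fintype_card]

section
variable {d k : ℕ} {w : Fin k → Bool} {π : Finset (Finset (Fin k))}

lemma bad_unique_aux (h : MemANC2 w π) {j j' t : Fin k} (h1 : BadPair w π j t)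
    (h2 : BadPair w π j' t) (hlt : j < j') : False := by
  obtain ⟨k₀, k', hjk, htk, hjt, htk', hkk, hno, hw⟩ := h1
  obtain ⟨l₀, l', hjl, htl, hjt', htl', hll, -, -⟩ := h2
  have := anc_right h htk htl
  subst this
  refine hno ⟨j', l₀, hjl, hlt, hjt', hll, ?_⟩
  rcases lt_trichotomy l₀ k₀ with h' | h' | h'
  · exact h'
  · subst h'
    exact absurd (anc_left h hjk hjl) hlt.ne
  · exact (anc_nc h hjk hjl hlt (hjt'.trans (htl'.trans hkk)) h').elim

lemma bad_unique (h : MemANC2 w π) {j j' t : Fin k} (h1 : BadPair w π j t)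
    (h2 : BadPair w π j' t) : j = j' := by
  rcases lt_trichotomy j j' with h' | h' | h'
  · exact (bad_unique_aux h h1 h2 h').elim
  · exact h'
  · exact (bad_unique_aux h h2 h1 h').elim

lemma bad_lt {j t : Fin k} (h1 : BadPair w π j t) : j < t := by
  obtain ⟨_, _, _, _, h, _⟩ := h1
  exact h

lemma bad_opener (h : MemANC2 w π) {j t a : Fin k} (h1 : BadPair w π j t) (h2 : a < t)
    (h3 : {a, t} ∈ π) : False := by
  obtain ⟨k₀, k', hjk, htk, hjt, htk', hkk, hno, hw⟩ := h1
  exact anc_mid h h3 htk h2 htk'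

open Classical in
lemma count_compat (h : MemANC2 w π) (x0 : Fin d) :
    Nat.card {i : Fin k → Fin d // Compat w π i} =
      ∏ S ∈ π, (d - if BadBlock w π S then 1 else 0) := by
  let c : Fin k → ℕ := fun t => if ∃ a, a < t ∧ {a, t} ∈ π then 1 else
    d - if ∃ j, BadPair w π j t then 1 else 0
  have h1 := count_gen x0
    (fun (t : Fin k) (i : Fin k → Fin d) =>
      (∀ a, a < t → {a, t} ∈ π → i a = i t) ∧ ∀ j, BadPair w π j t → i j ≠ i t) c
    (by
      intro t f g hfg
      have ht := hfg t le_rfl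
      constructor
      · rintro ⟨h1, h2⟩
        exact ⟨fun a ha hp => by rw [← ht, ← hfg a ha.le]; exact h1 a ha hp,
          fun j hj => by rw [← ht, ← hfg j (bad_lt hj).le]; exact h2 j hj⟩
      · rintro ⟨h1, h2⟩
        exact ⟨fun a ha hp => by rw [ht, hfg a ha.le]; exact h1 a ha hp,
          fun j hj => by rw [ht, hfg j (bad_lt hj).le]; exact h2 j hj⟩)
    (by
      intro t f
      have hP : ∀ x, ((∀ a, a < t → {a, t} ∈ π →
          Function.update f t x a = Function.update f t x t) ∧
          ∀ j, BadPair w π j t → Function.update f t x j ≠ Function.update f t x t) ↔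
          (∀ a, a < t → {a, t} ∈ π → f a = x) ∧ ∀ j, BadPair w π j t → f j ≠ x := by
        intro x
        refine and_congr ?_ ?_
        · refine forall_congr' fun a => forall_congr' fun ha => ?_
          rw [Function.update_of_ne ha.ne, Function.update_self]
        · refine forall_congr' fun a => forall_congr' fun ha => ?_
          rw [Function.update_of_ne (bad_lt ha).ne, Function.update_self]
      simp only [hP]
      rw [Nat.card_eq_fintype_card, Fintype.card_subtype]
      simp only [c]
      split_ifs with hcl hbad
      · obtain ⟨a, ha, hp⟩ := hcl
        rw [Finset.card_eq_one]
        refine ⟨f a, ?_⟩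
        ext x
        simp only [Finset.mem_filter, Finset.mem_univ, true_and, Finset.mem_singleton]
        constructor
        · intro hx
          exact (hx.1 a ha hp).symm
        · rintro rfl
          exact ⟨fun a' _ hp' => by rw [anc_left h hp hp'],
            fun j hj => (bad_opener h hj ha hp).elim⟩
      · obtain ⟨j, hj⟩ := hbad
        have : (Finset.univ.filter fun x => (∀ a, a < t → {a, t} ∈ π → f a = x) ∧
            ∀ j, BadPair w π j t → f j ≠ x) = {f j}ᶜ := by
          ext x
          simp only [Finset.mem_filter, Finset.mem_univ, true_and, Finset.mem_compl,
            Finset.mem_singleton]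
          constructor
          · intro hx
            exact fun he => hx.2 j hj he.symm
          · intro hx
            exact ⟨fun a ha hp => (hcl ⟨a, ha, hp⟩).elim,
              fun j' hj' => by rw [bad_unique h hj' hj]; exact fun he => hx he.symm⟩
        rw [this, Finset.card_compl]
        simp
      · have : (Finset.univ.filter fun x => (∀ a, a < t → {a, t} ∈ π → f a = x) ∧
            ∀ j, BadPair w π j t → f j ≠ x) = Finset.univ := by
          ext x
          simp only [Finset.mem_filter, Finset.mem_univ, true_and, iff_true]
          exact ⟨fun a ha hp => (hcl ⟨a, ha, hp⟩).elim,
            fun j' hj' => (hbad ⟨j', hj'⟩).elim⟩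
        rw [this]
        simp)
  have h2 : (Finset.univ : Finset (Fin k)) = π.biUnion id := by
    ext t
    simp only [Finset.mem_univ, Finset.mem_biUnion, id, true_iff]
    obtain ⟨S, hS, -⟩ := h.1.2 t
    exact ⟨S, hS⟩
  unfold Compat
  rw [h1, h2, Finset.prod_biUnion]
  · refine Finset.prod_congr rfl fun S hS => ?_
    obtain ⟨a, b, hab, rfl⟩ := anc_block h hS
    rw [id, Finset.prod_pair hab.ne]
    have hb : c b = 1 := if_pos ⟨a, hab, hS⟩
    have ha : c a = d - if ∃ j, BadPair w π j a then 1 else 0 :=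
      if_neg (by
        rintro ⟨x, hx, hp⟩
        exact anc_mid h hp hS hx hab)
    have hbb : BadBlock w π {a, b} ↔ ∃ j, BadPair w π j a := by
      constructor
      · rintro ⟨-, j, j', hj, hm, hmin⟩
        have : j' = a := by
          have h3 := hmin a (by simp)
          simp only [Finset.mem_insert, Finset.mem_singleton] at hm
          rcases hm with rfl | rfl
          · rfl
          · exact absurd h3 (not_le.2 hab)
        exact ⟨j, this ▸ hj⟩
      · rintro ⟨j, hj⟩
        exact ⟨hS, j, a, hj, by simp, by simp [hab.le]⟩
    rw [ha, hb, mul_one]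
    simp only [hbb]
  · intro S hS S' hS' hne
    rw [Function.onFun, Finset.disjoint_left]
    intro t ht ht'
    exact hne (anc_unique h hS hS' ht ht')

end

open Classical in
/-- The number of `w`-paths of a balanced word `w` satisfies
`M_d(w) = Σ_{π ∈ ANC₂(w)} ∏_{V ∈ π} (d - 1_{V ∈ B(π)})`. -/
theorem star_moment_pair_partition_formula (d p : ℕ) (hd : 2 ≤ d)
    (w : Fin (2 * p) → Bool) (hw : IsBalanced w) :
    Mword d w = ∑ π ∈ ANC2 w, ∏ S ∈ π, (d - if BadBlock w π S then 1 else 0) := by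
  have hm : ∀ π, π ∈ ANC2 w ↔ MemANC2 w π := by simp [ANC2]
  have h1 : ∀ π ∈ ANC2 w, (∏ S ∈ π, (d - if BadBlock w π S then 1 else 0)) =
      (Finset.univ.filter fun i : Fin (2 * p) → Fin d => Compat w π i).card := by
    intro π hπ
    rw [← count_compat ((hm π).1 hπ) ⟨0, by omega⟩, Nat.card_eq_fintype_card,
      Fintype.card_subtype]
  rw [Finset.sum_congr rfl h1, ← Finset.card_biUnion]
  · rw [Mword, Nat.card_eq_fintype_card, Fintype.card_subtype]
    congr 1
    ext i
    simp only [Finset.mem_filter, Finset.mem_univ, true_and, Finset.mem_biUnion, hm]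
    exact ⟨compat_exists, fun ⟨π, h, hc⟩ => compat_path h hc⟩
  · intro π hπ π' hπ' hne
    rw [Function.onFun, Finset.disjoint_left]
    intro i hi hi'
    simp only [Finset.mem_filter, Finset.mem_univ, true_and] at hi hi'
    exact hne (compat_unique ((hm π).1 hπ) hi ((hm π').1 hπ') hi')
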